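/- arXiv:2110.01138 — 2 statements merged into one kernel-verified Lean document; each statement's English description precedes it below -/
import Mathlib

section
/- Let K be a reflective full subcategory of Top₀ closed under homeomorphisms such that K ⊄ Top₁. If f : X → Y is a continuous map between sober spaces X and Y, and Y₁ ⊆ Y is a subset whose subspace belongs to K, then the subspace f⁻¹(Y₁) of X belongs to K. -/
/-!
A space whose reflection map has a continuous left inverse lies in `K`. The reflection of
`f ⁻¹' Y₁` admits such a left inverse as soon as the inclusion into `X` and the restriction of `f`
into `Y₁` both extend to it, compatibly in `Y`.

The role of `K ⊄ Top₁` is that it puts the Sierpiński space into `K`, as a retract of a space with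
two distinct comparable points. Since open sets are maps into the Sierpiński space, every
reflection `μ : X → Xk` then induces a bijection of open sets. Consequently `μ` is an epimorphism
with respect to all `T₀` spaces, which gives the compatibility in `Y`, and `μ` is a homeomorphism
when `X` is sober, which gives the extension of the inclusion into `X`.
-/

open TopologicalSpace

/-- The b-topology associated with a topological space `(X, t)`: the topology with base
`{U ∩ cl({x}) : x ∈ U, U open}`. -/
def bTop (X : Type) (t : TopologicalSpace X) : TopologicalSpace X :=
  TopologicalSpace.generateFrom
    {s | ∃ (U : Set X) (x : X), @IsOpen X t U ∧ x ∈ U ∧ s = U ∩ @closure X t {x}}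

/-- The specialization order of `(X, t)`: `x ≤ y` iff `x ∈ cl({y})`. -/
def specLE {X : Type} (t : TopologicalSpace X) (x y : X) : Prop :=
  x ∈ @closure X t {y}

/-- The subspace topology on a subset. -/
def subTop {X : Type} (t : TopologicalSpace X) (A : Set X) : TopologicalSpace A :=
  TopologicalSpace.induced Subtype.val t

/-- A class of topological spaces, viewed as the object class of a full subcategory of Top. -/
abbrev SpaceClass : Type 1 := (X : Type) → TopologicalSpace X → Prop

/-- All members of `K` are T₀ (i.e. `K` is a subcategory of `Top₀`). -/
def AllT0 (K : SpaceClass) : Prop := ∀ X t, K X t → @T0Space X t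

/-- `K` is closed under homeomorphisms. -/
def ClosedUnderHomeo (K : SpaceClass) : Prop :=
  ∀ (X Y : Type) (tX : TopologicalSpace X) (tY : TopologicalSpace Y),
    K X tX → Nonempty (@Homeomorph X Y tX tY) → K Y tY

/-- `K ⊄ Top₁`: `K` contains a space that is not T₁. -/
def NotSubT1 (K : SpaceClass) : Prop := ∃ X t, K X t ∧ ¬ @T1Space X t

/-- `μ : X → Xk` is a K-reflection for `X`: `Xk ∈ K`, `μ` is continuous and every continuous map
from `X` to a member of `K` factors uniquely (continuously) through `μ`. -/
def IsReflection (K : SpaceClass) {X Xk : Type} (tX : TopologicalSpace X)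
    (tk : TopologicalSpace Xk) (μ : X → Xk) : Prop :=
  K Xk tk ∧ @Continuous X Xk tX tk μ ∧
    ∀ (Z : Type) (tZ : TopologicalSpace Z), K Z tZ →
      ∀ f : X → Z, @Continuous X Z tX tZ f →
        ∃! g : Xk → Z, @Continuous Xk Z tk tZ g ∧ g ∘ μ = f

/-- `K` is reflective in `Top₀`: every T₀ space admits a K-reflection. -/
def IsReflective (K : SpaceClass) : Prop :=
  ∀ (X : Type) (tX : TopologicalSpace X), @T0Space X tX →
    ∃ (Xk : Type) (tk : TopologicalSpace Xk) (μ : X → Xk), IsReflection K tX tk μ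

/-- `K` is b-closed-hereditary. -/
def BClosedHereditary (K : SpaceClass) : Prop :=
  ∀ (X : Type) (tX : TopologicalSpace X) (A : Set X),
    K X tX → @IsClosed X (bTop X tX) A → K A (subTop tX A)

/-- `K` is productive. -/
def Productive (K : SpaceClass) : Prop :=
  ∀ (I : Type) (X : I → Type) (t : ∀ i, TopologicalSpace (X i)),
    (∀ i, K (X i) (t i)) → K (∀ i, X i) (@Pi.topologicalSpace I X t)

/-- `K` has equalizers. -/
def HasEqualizers (K : SpaceClass) : Prop :=
  ∀ (X Y : Type) (tX : TopologicalSpace X) (tY : TopologicalSpace Y),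
    K X tX → K Y tY → ∀ f g : X → Y, @Continuous X Y tX tY f → @Continuous X Y tX tY g →
      K {x | f x = g x} (subTop tX {x | f x = g x})

/-- `(X, t)` is sober: T₀ and every irreducible closed set is the closure of a point. -/
def Sober (X : Type) (t : TopologicalSpace X) : Prop := @T0Space X t ∧ @QuasiSober X t

section Topology

open Function Set Topology

variable {X Y Z : Type*} [TopologicalSpace X] [TopologicalSpace Y] [TopologicalSpace Z]

theorem isIrreducible_of_isInducing_of_image {μ : X → Z} (hμ : IsInducing μ) {s : Set X}
    (hs : IsIrreducible (μ '' s)) : IsIrreducible s := by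
  refine ⟨hs.nonempty.of_image, fun U U' hU hU' hsU hsU' => ?_⟩
  obtain ⟨V, hV, rfl⟩ := hμ.isOpen_iff.1 hU
  obtain ⟨V', hV', rfl⟩ := hμ.isOpen_iff.1 hU'
  rw [← preimage_inter, ← image_inter_nonempty_iff]
  exact hs.isPreirreducible V V' hV hV' (image_inter_nonempty_iff.2 hsU)
    (image_inter_nonempty_iff.2 hsU')

theorem eq_of_comp_eq_of_injOn_preimage_isOpen [T0Space Y] {α : Type*} {μ : α → Z}
    (hμ : InjOn (preimage μ) {V | IsOpen V}) {g g' : Z → Y} (hg : Continuous g)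
    (hg' : Continuous g') (h : g ∘ μ = g' ∘ μ) : g = g' := by
  funext z
  refine (inseparable_iff_forall_isOpen.2 fun U hU => ?_).eq
  have hpreimage : g ⁻¹' U = g' ⁻¹' U :=
    hμ (hU.preimage hg) (hU.preimage hg') (by rw [← preimage_comp, ← preimage_comp, h])
  exact Set.ext_iff.1 hpreimage z

theorem closure_image_preimage_of_injOn_preimage_isOpen {α : Type*} {μ : α → Z}
    (hμ : InjOn (preimage μ) {V | IsOpen V}) {C : Set Z} (hC : IsClosed C) :
    closure (μ '' (μ ⁻¹' C)) = C := by
  refine compl_injective (hμ isClosed_closure.isOpen_compl hC.isOpen_compl ?_)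
  rw [preimage_compl, preimage_compl]
  congr 1
  exact (preimage_mono (closure_minimal (image_preimage_subset μ C) hC)).antisymm
    (image_subset_iff.1 subset_closure)

theorem surjective_of_isInducing_of_injOn_preimage_isOpen [QuasiSober X] [T0Space Z] {μ : X → Z}
    (hμ : IsInducing μ) (hinj : InjOn (preimage μ) {V | IsOpen V}) : Surjective μ := by
  intro z
  have hclosure : closure (μ '' (μ ⁻¹' closure {z})) = closure {z} :=
    closure_image_preimage_of_injOn_preimage_isOpen hinj isClosed_closure
  have hirr : IsIrreducible (μ ⁻¹' closure {z}) := by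
    refine isIrreducible_of_isInducing_of_image hμ (isIrreducible_iff_closure.1 ?_)
    rw [hclosure]
    exact isIrreducible_singleton.closure
  obtain ⟨x, hx⟩ := QuasiSober.sober hirr (isClosed_closure.preimage hμ.continuous)
  have hμx : IsGenericPoint (μ x) (closure {z}) := hclosure ▸ hx.image hμ.continuous
  exact ⟨x, hμx.eq isGenericPoint_closure⟩

theorem exists_prop_retraction_of_not_t1Space [T0Space Z] (hZ : ¬ T1Space Z) :
    ∃ (s : Prop → Z) (r : Z → Prop), Continuous s ∧ Continuous r ∧ LeftInverse r s := by
  classical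
  simp only [t1Space_iff_specializes_imp_eq, not_forall] at hZ
  obtain ⟨y, x, hyx, hne⟩ := hZ
  have hxy : ¬ x ⤳ y := fun hxy => hne (hyx.antisymm hxy).eq
  obtain ⟨U, hU, hyU, hxU⟩ := not_specializes_iff_exists_open.1 hxy
  refine ⟨piecewise {True} (const Prop y) (const Prop x), (· ∈ U),
    isOpen_singleton_true.continuous_piecewise_of_specializes continuous_const continuous_const
      fun _ => hyx, continuous_Prop.2 hU, fun p => ?_⟩
  by_cases hp : p <;> simp [piecewise, hp, hyU, hxU]

end Topology

section Reflection

open Function Set Topology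

variable {K : SpaceClass} {X Xk Y Z : Type} [tX : TopologicalSpace X] [tk : TopologicalSpace Xk]
  [tY : TopologicalSpace Y] [tZ : TopologicalSpace Z] {μ : X → Xk}

namespace IsReflection

theorem exists_comp_eq (hμ : IsReflection K tX tk μ) (hZ : K Z tZ) {f : X → Z}
    (hf : Continuous f) : ∃ g : Xk → Z, Continuous g ∧ g ∘ μ = f :=
  (hμ.2.2 Z tZ hZ f hf).exists

theorem eq_of_comp_eq (hμ : IsReflection K tX tk μ) (hZ : K Z tZ) {g g' : Xk → Z}
    (hg : Continuous g) (hg' : Continuous g') (h : g ∘ μ = g' ∘ μ) : g = g' :=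
  (hμ.2.2 Z tZ hZ (g' ∘ μ) (hg'.comp hμ.2.1)).unique ⟨hg, h⟩ ⟨hg', rfl⟩

theorem mem_of_leftInverse (hμ : IsReflection K tX tk μ) (hHomeo : ClosedUnderHomeo K)
    {r : Xk → X} (hr : Continuous r) (hrμ : LeftInverse r μ) : K X tX := by
  have hμr : μ ∘ r = id :=
    hμ.eq_of_comp_eq hμ.1 (hμ.2.1.comp hr) continuous_id
      (by rw [comp_assoc, hrμ.comp_eq_id, comp_id, id_comp])
  exact hHomeo Xk X tk tX hμ.1 ⟨⟨⟨r, μ, congrFun hμr, hrμ⟩, hr, hμ.2.1⟩⟩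

theorem isInducing (hμ : IsReflection K tX tk μ) (hS : K Prop sierpinskiSpace) :
    IsInducing μ := by
  refine ⟨le_antisymm hμ.2.1.le_induced fun U hU => ?_⟩
  obtain ⟨g, hg, hgμ⟩ := hμ.exists_comp_eq hS (isOpen_iff_continuous_mem.1 hU)
  exact ⟨{z | g z}, continuous_Prop.1 hg, hgμ⟩

theorem injOn_preimage_isOpen (hμ : IsReflection K tX tk μ) (hS : K Prop sierpinskiSpace) :
    InjOn (preimage μ) {V | IsOpen V} := fun _ hV _ hV' h =>
  hμ.eq_of_comp_eq hS (isOpen_iff_continuous_mem.1 hV) (isOpen_iff_continuous_mem.1 hV') h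

end IsReflection

namespace IsReflective

theorem mem_of_retract (hRefl : IsReflective K) (hHomeo : ClosedUnderHomeo K) [T0Space X]
    (hZ : K Z tZ) {s : X → Z} {r : Z → X} (hs : Continuous s) (hr : Continuous r)
    (hrs : LeftInverse r s) : K X tX := by
  obtain ⟨Xk, tk, μ, hμ⟩ := hRefl X tX inferInstance
  obtain ⟨g, hg, rfl⟩ := hμ.exists_comp_eq hZ hs
  exact hμ.mem_of_leftInverse hHomeo (hr.comp hg) hrs

theorem sierpinskiSpace_mem (hRefl : IsReflective K) (hT0 : AllT0 K)
    (hHomeo : ClosedUnderHomeo K) (hNotT1 : NotSubT1 K) : K Prop sierpinskiSpace := by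
  obtain ⟨Z, tZ, hZ, hZT1⟩ := hNotT1
  have : T0Space Z := hT0 Z tZ hZ
  obtain ⟨s, r, hs, hr, hrs⟩ := exists_prop_retraction_of_not_t1Space hZT1
  exact hRefl.mem_of_retract hHomeo hZ hs hr hrs

theorem mem_of_sober (hRefl : IsReflective K) (hT0 : AllT0 K) (hHomeo : ClosedUnderHomeo K)
    (hNotT1 : NotSubT1 K) (hX : Sober X tX) : K X tX := by
  obtain ⟨hXT0, hXsober⟩ := hX
  obtain ⟨Xk, tk, μ, hμ⟩ := hRefl X tX hXT0
  have : T0Space Xk := hT0 Xk tk hμ.1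
  have hS : K Prop sierpinskiSpace := hRefl.sierpinskiSpace_mem hT0 hHomeo hNotT1
  have hsurj : Surjective μ :=
    surjective_of_isInducing_of_injOn_preimage_isOpen (hμ.isInducing hS)
      (hμ.injOn_preimage_isOpen hS)
  exact hHomeo Xk X tk tX hμ.1
    ⟨((hμ.isInducing hS).isEmbedding.toHomeomorphOfSurjective hsurj).symm⟩

end IsReflective

theorem statement14_general (hT0 : AllT0 K) (hHomeo : ClosedUnderHomeo K)
    (hRefl : IsReflective K) (hNotT1 : NotSubT1 K) (hX : K X tX) [T0Space Y] {f : X → Y}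
    (hf : Continuous f) {Y₁ : Set Y} (hY₁ : K Y₁ (subTop tY Y₁)) :
    K (f ⁻¹' Y₁) (subTop tX (f ⁻¹' Y₁)) := by
  have : T0Space X := hT0 X tX hX
  obtain ⟨P, tP, μ, hμ⟩ := hRefl (f ⁻¹' Y₁) instTopologicalSpaceSubtype inferInstance
  obtain ⟨i, hi, hiμ⟩ := hμ.exists_comp_eq hX continuous_subtype_val
  obtain ⟨g, hg, hgμ⟩ := hμ.exists_comp_eq hY₁ (hf.restrictPreimage (s := Y₁))
  have hfi : f ∘ i = Subtype.val ∘ g :=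
    eq_of_comp_eq_of_injOn_preimage_isOpen
      (hμ.injOn_preimage_isOpen (hRefl.sierpinskiSpace_mem hT0 hHomeo hNotT1))
      (hf.comp hi) (continuous_subtype_val.comp hg)
      (by rw [comp_assoc, comp_assoc, hiμ, hgμ]; rfl)
  have hmem (z : P) : i z ∈ f ⁻¹' Y₁ := by
    have hfiz : f (i z) = g z := congrFun hfi z
    exact mem_preimage.2 (hfiz ▸ (g z).2)
  exact hμ.mem_of_leftInverse hHomeo (hi.subtype_mk hmem)
    fun x => Subtype.ext (congrFun hiμ x)

end Reflection

/-- let `K` be a reflective full subcategory of Top₀ closed under homeomorphisms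
containing a non-T₁ space. If `f : X → Y` is continuous, `X`, `Y` sober, and the subspace
`Y₁ ⊆ Y` belongs to `K`, then the subspace `f⁻¹(Y₁)` belongs to `K`. -/
theorem statement14 (K : SpaceClass) (hT0 : AllT0 K) (hHomeo : ClosedUnderHomeo K)
    (hRefl : IsReflective K) (hNotT1 : NotSubT1 K)
    (X Y : Type) (tX : TopologicalSpace X) (tY : TopologicalSpace Y)
    (hX : Sober X tX) (hY : Sober Y tY)
    (f : X → Y) (hf : @Continuous X Y tX tY f)
    (Y₁ : Set Y) (hY₁ : K Y₁ (subTop tY Y₁)) :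
    K (f ⁻¹' Y₁) (subTop tX (f ⁻¹' Y₁)) := by
  have : T0Space Y := hY.1
  exact statement14_general hT0 hHomeo hRefl hNotT1 (hRefl.mem_of_sober hT0 hHomeo hNotT1 hX) hf hY₁
end

section
/- The category Co-Sob of all co-sober T₀ spaces (a full subcategory of Top₀) is not reflective in Top₀, i.e., the inclusion functor Co-Sob → Top₀ has no left adjoint. -/
open TopologicalSpace

/-- A subset is saturated if it is the intersection of the open sets containing it. -/
def IsSaturatedSet {X : Type} (t : TopologicalSpace X) (Q : Set X) : Prop :=
  Q = ⋂₀ {U : Set X | @IsOpen X t U ∧ Q ⊆ U}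

/-- A nonempty compact saturated set `Q` is k-irreducible if whenever `Q = Q₁ ∪ Q₂` with
`Q₁, Q₂` compact saturated, then `Q = Q₁` or `Q = Q₂`. -/
def KIrreducible {X : Type} (t : TopologicalSpace X) (Q : Set X) : Prop :=
  Q.Nonempty ∧ @IsCompact X t Q ∧ IsSaturatedSet t Q ∧
    ∀ Q₁ Q₂ : Set X, @IsCompact X t Q₁ → IsSaturatedSet t Q₁ →
      @IsCompact X t Q₂ → IsSaturatedSet t Q₂ →
        Q = Q₁ ∪ Q₂ → Q = Q₁ ∨ Q = Q₂

/-- A T₀ space is co-sober if every k-irreducible compact saturated set is `↑x` for a unique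
point `x`. -/
def CoSober (X : Type) (t : TopologicalSpace X) : Prop :=
  ∀ Q : Set X, KIrreducible t Q → ∃! x : X, Q = {y | specLE t x y}

/-- The full subcategory of co-sober T₀ spaces. -/
def CoSobClass : SpaceClass := fun X t => @T0Space X t ∧ CoSober X t

/-!
Let `K` be a reflective class of T₀ spaces, one of which has distinct points `y ⤳ x`. This
pair plays the role of the Sierpiński space, so open sets of a reflection `Xk` that agree on `X`
coincide. If `A` is b-closed in a member `Y` of `K`, the extension `Ak → Y` of the inclusion
therefore takes values in `A`; hence `A` is a retract of its reflection and, by uniqueness,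
homeomorphic to it. So `K` is b-closed-hereditary.

Co-sober spaces are not b-closed-hereditary. On the tree `ℕ^{<ω}` let the children of `x` converge
to `x` and the grandchildren of `x` to a vertex `label x`, every vertex being the label of
infinitely many children of `x`. If two compact sets cover the tree and the first misses `x`, then
for each vertex `y` it misses a child `x'` of `x` with label `y`, hence almost all children of `x'`,
hence some child of each of these. Those grandchildren of `x'` lie in the second compact set, and so
does their limit `y`. Thus the tree is k-irreducible, and it is T₁, so not co-sober. Now put a point
`top x` above each vertex `x`, and let the grandchildren of `x` converge to `top (label x)` as well:
compact saturated sets can then shed whole subtrees and stay compact, which makes the enlarged space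
co-sober, while the tree is b-closed in it.
-/

open Set Filter Topology

section Reflective

theorem isTopologicalBasis_bTop (X : Type) (t : TopologicalSpace X) :
    @IsTopologicalBasis X (bTop X t)
      {s | ∃ (U : Set X) (x : X), IsOpen U ∧ x ∈ U ∧ s = U ∩ closure {x}} := by
  refine @IsTopologicalBasis.mk X (bTop X t) _ ?_ ?_ rfl
  · rintro _ ⟨U, x, hU, -, rfl⟩ _ ⟨V, y, hV, -, rfl⟩ z ⟨⟨hzU, hzx⟩, hzV, hzy⟩
    refine ⟨_, ⟨U ∩ V, z, hU.inter hV, ⟨hzU, hzV⟩, rfl⟩, ⟨⟨hzU, hzV⟩, subset_closure rfl⟩, ?_⟩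
    rintro w ⟨⟨hwU, hwV⟩, hwz⟩
    exact ⟨⟨hwU, closure_minimal (singleton_subset_iff.2 hzx) isClosed_closure hwz⟩,
      hwV, closure_minimal (singleton_subset_iff.2 hzy) isClosed_closure hwz⟩
  · exact sUnion_eq_univ_iff.2 fun x =>
      ⟨_, ⟨univ, x, isOpen_univ, mem_univ x, rfl⟩, mem_univ x, subset_closure rfl⟩

theorem isClosed_bTop_iff {X : Type} [t : TopologicalSpace X] {A : Set X} :
    @IsClosed X (bTop X t) A ↔
      ∀ z ∉ A, ∃ U, IsOpen U ∧ z ∈ U ∧ Disjoint A (U ∩ closure {z}) := by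
  rw [← @isOpen_compl_iff X A (bTop X t),
    @IsTopologicalBasis.isOpen_iff X (bTop X t) _ _ (isTopologicalBasis_bTop X t)]
  refine forall₂_congr fun z _ => ⟨?_, ?_⟩
  · rintro ⟨_, ⟨U, x, hU, -, rfl⟩, ⟨hzU, hzx⟩, hA⟩
    refine ⟨U, hU, hzU, (subset_compl_iff_disjoint_left.1 hA).mono_right ?_⟩
    exact inter_subset_inter_right U
      (closure_minimal (singleton_subset_iff.2 hzx) isClosed_closure)
  · rintro ⟨U, hU, hzU, hA⟩
    exact ⟨_, ⟨U, z, hU, hzU, rfl⟩, ⟨hzU, subset_closure rfl⟩, subset_compl_iff_disjoint_left.2 hA⟩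

variable {K : SpaceClass} {X Xk Y : Type} [tX : TopologicalSpace X] [tk : TopologicalSpace Xk]
  [tY : TopologicalSpace Y] {μ : X → Xk}

theorem IsReflection.eq_of_comp_eq_s16 (h : IsReflection K tX tk μ) (hY : K Y tY) {f g : Xk → Y}
    (hf : Continuous f) (hg : Continuous g) (hfg : f ∘ μ = g ∘ μ) : f = g :=
  (h.2.2 Y tY hY (g ∘ μ) (hg.comp h.2.1)).unique ⟨hf, hfg⟩ ⟨hg, rfl⟩

open scoped Classical in
theorem continuous_ite_mem_of_specializes {x y : Y} (hxy : y ⤳ x) {U : Set X} (hU : IsOpen U) :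
    Continuous fun a => if a ∈ U then y else x := by
  refine continuous_def.2 fun W hW => ?_
  by_cases hx : x ∈ W
  · convert isOpen_univ
    ext a
    by_cases ha : a ∈ U <;> simp [ha, hx, hxy.mem_open hW hx]
  by_cases hy : y ∈ W
  · convert hU
    ext a
    by_cases ha : a ∈ U <;> simp [ha, hx, hy]
  · convert isOpen_empty
    ext a
    by_cases ha : a ∈ U <;> simp [ha, hx, hy]

theorem IsReflection.eq_of_preimage_eq (h : IsReflection K tX tk μ) (hK : NotSubT1 K)
    {U V : Set Xk} (hU : IsOpen U) (hV : IsOpen V) (hUV : μ ⁻¹' U = μ ⁻¹' V) : U = V := by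
  classical
  obtain ⟨Z, tZ, hZ, hT1⟩ := hK
  obtain ⟨y, x, hyx, hne⟩ : ∃ y x : Z, y ⤳ x ∧ y ≠ x := by
    simpa only [t1Space_iff_specializes_imp_eq, not_forall, exists_prop] using hT1
  have hite : (fun k => if k ∈ U then y else x) = fun k => if k ∈ V then y else x := by
    refine h.eq_of_comp_eq_s16 hZ (continuous_ite_mem_of_specializes hyx hU)
      (continuous_ite_mem_of_specializes hyx hV) (funext fun a => ?_)
    have ha : μ a ∈ U ↔ μ a ∈ V := Set.ext_iff.1 hUV a
    simp only [Function.comp_apply, ha]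
  ext k
  have hk : (if k ∈ U then y else x) = if k ∈ V then y else x := congrFun hite k
  rw [← hne.ite_eq_left_iff (P := k ∈ U), hk, hne.ite_eq_left_iff]

theorem IsReflection.mem_of_isClosed_bTop (h : IsReflection K tX tk μ) (hK : NotSubT1 K)
    {A : Set Y} (hA : @IsClosed Y (bTop Y tY) A) {e : Xk → Y} (he : Continuous e)
    (hmem : ∀ x, e (μ x) ∈ A) (k : Xk) : e k ∈ A := by
  by_contra hk
  obtain ⟨U, hU, hkU, hAU⟩ := isClosed_bTop_iff.1 hA _ hk
  have hV : IsOpen (U \ closure {e k}) := hU.sdiff isClosed_closure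
  have hUV : e ⁻¹' U = e ⁻¹' (U \ closure {e k}) := by
    refine h.eq_of_preimage_eq hK (hU.preimage he) (hV.preimage he) (Set.ext fun x => ?_)
    exact ⟨fun hx => ⟨hx, fun hc => disjoint_left.1 hAU (hmem x) ⟨hx, hc⟩⟩, And.left⟩
  have hk' : k ∈ e ⁻¹' (U \ closure {e k}) := hUV ▸ hkU
  exact hk'.2 (subset_closure rfl)

theorem IsReflection.nonempty_homeomorph_of_leftInverse (h : IsReflection K tX tk μ) {r : Xk → X}
    (hr : Continuous r) (hrμ : Function.LeftInverse r μ) : Nonempty (Xk ≃ₜ X) := by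
  have hμr : μ ∘ r = id := h.eq_of_comp_eq_s16 h.1 (h.2.1.comp hr) continuous_id <| by
    rw [Function.comp_assoc, hrμ.comp_eq_id, Function.comp_id, Function.id_comp]
  exact ⟨⟨⟨r, μ, congrFun hμr, hrμ⟩, hr, h.2.1⟩⟩

theorem IsReflective.bClosedHereditary (h : IsReflective K) (hT0 : AllT0 K)
    (hhomeo : ClosedUnderHomeo K) (hT1 : NotSubT1 K) : BClosedHereditary K := by
  intro Y tY A hY hA
  have : T0Space Y := hT0 Y tY hY
  obtain ⟨Xk, tk, μ, hμ⟩ := h A (subTop tY A) (Subtype.t0Space (p := (· ∈ A)))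
  obtain ⟨e, ⟨he, hcomp⟩, -⟩ := hμ.2.2 Y tY hY Subtype.val continuous_subtype_val
  have heμ (a : A) : e (μ a) = a := congrFun hcomp a
  have hmem : ∀ k, e k ∈ A := hμ.mem_of_isClosed_bTop hT1 hA he fun a => heμ a ▸ a.2
  exact hhomeo _ _ _ _ hμ.1 <| hμ.nonempty_homeomorph_of_leftInverse (he.subtype_mk hmem)
    fun a => Subtype.ext (heμ a)

end Reflective

section CoSober

variable {X Y : Type} [tX : TopologicalSpace X] [tY : TopologicalSpace Y] {Q : Set X}

theorem isSaturatedSet_iff_nhdsKer_eq : IsSaturatedSet tX Q ↔ nhdsKer Q = Q := by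
  rw [nhdsKer_def, eq_comm, IsSaturatedSet]

theorem isSaturatedSet_iff_forall_specializes :
    IsSaturatedSet tX Q ↔ ∀ x y, x ⤳ y → y ∈ Q → x ∈ Q := by
  rw [isSaturatedSet_iff_nhdsKer_eq, Subset.antisymm_iff, and_iff_left subset_nhdsKer,
    subset_def]
  simp only [mem_nhdsKer_iff_specializes, forall_exists_index, and_imp]
  exact forall₂_congr fun x y => forall_comm

theorem setOf_specLE_eq_nhdsKer (x : X) : {y | specLE tX x y} = nhdsKer {x} := by
  ext y
  rw [mem_nhdsKer_singleton, specializes_iff_mem_closure, mem_ofPred, specLE]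

theorem coSober_iff [T0Space X] :
    CoSober X tX ↔ ∀ Q, KIrreducible tX Q → ∃ x, Q = nhdsKer {x} := by
  simp only [CoSober, setOf_specLE_eq_nhdsKer]
  refine forall₂_congr fun Q _ => ⟨ExistsUnique.exists, ?_⟩
  rintro ⟨x, rfl⟩
  refine ⟨x, rfl, fun y hxy => ?_⟩
  exact ((specializes_iff_nhdsKer_subset.2 hxy.ge).antisymm
    (specializes_iff_nhdsKer_subset.2 hxy.le)).eq

theorem IsSaturatedSet.preimage {f : X → Y} (hf : Continuous f) {Q : Set Y}
    (hQ : IsSaturatedSet tY Q) : IsSaturatedSet tX (f ⁻¹' Q) := by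
  rw [isSaturatedSet_iff_forall_specializes] at hQ ⊢
  exact fun x y hxy => hQ _ _ (hxy.map hf)

theorem KIrreducible.preimage_homeomorph (φ : X ≃ₜ Y) {Q : Set Y} (hQ : KIrreducible tY Q) :
    KIrreducible tX (φ ⁻¹' Q) := by
  obtain ⟨hne, hc, hs, hirr⟩ := hQ
  refine ⟨hne.preimage φ.surjective, φ.isCompact_preimage.2 hc, hs.preimage φ.continuous, ?_⟩
  intro Q₁ Q₂ hc₁ hs₁ hc₂ hs₂ hunion
  have hQ : Q = φ.symm ⁻¹' Q₁ ∪ φ.symm ⁻¹' Q₂ := by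
    rw [← preimage_union, ← hunion, ← preimage_comp, φ.self_comp_symm, preimage_id]
  refine (hirr _ _ (φ.symm.isCompact_preimage.2 hc₁) (hs₁.preimage φ.symm.continuous)
    (φ.symm.isCompact_preimage.2 hc₂) (hs₂.preimage φ.symm.continuous) hQ).imp ?_ ?_ <;>
  · rintro rfl
    rw [← preimage_comp, φ.symm_comp_self, preimage_id]

theorem allT0_coSobClass : AllT0 CoSobClass := fun _ _ h => h.1

theorem closedUnderHomeo_coSobClass : ClosedUnderHomeo CoSobClass := by
  rintro X Y tX tY ⟨hT0, hX⟩ ⟨φ⟩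
  have : T0Space Y := φ.t0Space
  refine ⟨this, coSober_iff.2 fun Q hQ => ?_⟩
  obtain ⟨x, hx⟩ := coSober_iff.1 hX _ (hQ.preimage_homeomorph φ)
  refine ⟨φ x, Set.ext fun y => ?_⟩
  obtain ⟨z, rfl⟩ := φ.surjective y
  rw [mem_nhdsKer_singleton, φ.isInducing.specializes_iff, ← mem_nhdsKer_singleton, ← hx,
    mem_preimage]

theorem KIrreducible.eq_nhdsKer_singleton (hQ : KIrreducible tX Q) {x : X} (hx : x ∈ Q)
    (hc : IsCompact (Q \ {x})) (hs : IsSaturatedSet tX (Q \ {x})) : Q = nhdsKer {x} := by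
  have hxQ : nhdsKer {x} ⊆ Q := by
    rw [← isSaturatedSet_iff_nhdsKer_eq.1 hQ.2.2.1]
    exact nhdsKer_mono (singleton_subset_iff.2 hx)
  have hunion : Q = nhdsKer {x} ∪ Q \ {x} := by
    refine Subset.antisymm (fun y hy => ?_) (union_subset hxQ sdiff_subset)
    by_cases hyx : y = x
    · exact Or.inl (hyx ▸ subset_nhdsKer rfl)
    · exact Or.inr ⟨hy, hyx⟩
  refine (hQ.2.2.2 _ _ isCompact_singleton.nhdsKer
    (isSaturatedSet_iff_nhdsKer_eq.2 (nhdsKer_nhdsKer _)) hc hs hunion).resolve_right fun h => ?_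
  exact (h ▸ hx : x ∈ Q \ {x}).2 rfl

theorem not_coSober_of_t1Space [T1Space X] [CompactSpace X] [Nontrivial X]
    (h : ∀ Q₁ Q₂ : Set X, IsCompact Q₁ → IsCompact Q₂ → Q₁ ∪ Q₂ = univ → Q₁ = univ ∨ Q₂ = univ) :
    ¬ CoSober X tX := by
  intro hX
  have hirr : KIrreducible tX univ := by
    refine ⟨univ_nonempty, isCompact_univ, isSaturatedSet_iff_nhdsKer_eq.2 nhdsKer_univ, ?_⟩
    intro Q₁ Q₂ hc₁ _ hc₂ _ hunion
    simpa only [eq_comm] using h Q₁ Q₂ hc₁ hc₂ hunion.symm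
  obtain ⟨x, hx⟩ := coSober_iff.1 hX univ hirr
  obtain ⟨y, hyx⟩ := exists_ne x
  have hy : y ∈ nhdsKer {x} := hx ▸ mem_univ y
  exact hyx (mem_nhdsKer_singleton.1 hy).eq

end CoSober

theorem inter_nonempty_of_isClosed_union {X : Type*} [TopologicalSpace X] {K S T : Set X}
    (hK : IsCompact K) (hSK : S ⊆ K) (hS : S.Infinite) (hclosed : ∀ R ⊆ S, IsClosed (R ∪ T)) :
    (K ∩ T).Nonempty := by
  obtain ⟨a, haK, ha⟩ := hS.exists_accPt_of_subset_isCompact hK hSK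
  refine ⟨a, haK, by_contra fun haT => ?_⟩
  have hnhds : (S \ {a} ∪ T)ᶜ ∈ 𝓝 a := by
    refine (hclosed (S \ {a}) sdiff_subset).isOpen_compl.mem_nhds ?_
    simpa using haT
  obtain ⟨b, ⟨hb, hbS⟩, hba⟩ := accPt_iff_nhds.1 ha _ hnhds
  exact hb (Or.inl ⟨hbS, hba⟩)

/-- Two copies `bot l ≤ top l` of every vertex of the tree `ℕ^{<ω}`, where the children of the
vertex `l` are the lists `n :: l`. With the topology below this is a co-sober space whose subspace
of bottom points is not co-sober. -/
inductive TreePoint : Type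
  | bot (l : List ℕ)
  | top (l : List ℕ)

namespace TreePoint

/-- The vertex to which the grandchildren of a given vertex converge. The only requirement is that
every vertex is the label of infinitely many children of each vertex. -/
def label : List ℕ → List ℕ
  | [] => []
  | n :: _ => Denumerable.ofNat (List ℕ) n.unpair.1

theorem frequently_label_cons (x y : List ℕ) : ∃ᶠ n in cofinite, label (n :: x) = y := by
  have hinj : Function.Injective (Nat.pair (Encodable.encode y)) := fun a b h =>
    (Nat.pair_eq_pair.1 h).2
  refine hinj.tendsto_cofinite.frequently (Eventually.of_forall fun k => ?_).frequently
  simp only [label, Nat.unpair_pair, Denumerable.ofNat_encode]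

theorem cons_left_injective (x : List ℕ) : Function.Injective fun n => n :: x :=
  fun _ _ h => (List.cons.inj h).1

theorem eventually_cons_ne (x y : List ℕ) : ∀ᶠ n in cofinite, n :: x ≠ y :=
  (cons_left_injective x).tendsto_cofinite.eventually (eventually_cofinite_ne y)

theorem bot_injective : Function.Injective bot := fun _ _ => bot.inj

/-- The set of bottom points over the children of a vertex. -/
def children (x : List ℕ) : Set TreePoint := range fun n => bot (n :: x)

/-- The set of bottom points over the grandchildren of a vertex. -/
def grandchildren (x : List ℕ) : Set TreePoint := ⋃ n, children (n :: x)

/-- The filter of sets containing almost all children of a vertex. -/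
def childFilter (x : List ℕ) : Filter TreePoint := cofinite.map fun n => bot (n :: x)

/-- The filter of sets containing all the children of almost every child of a vertex. -/
def grandchildFilter (x : List ℕ) : Filter TreePoint :=
  (cofinite.comap Prod.fst).map fun p : ℕ × ℕ => bot (p.2 :: p.1 :: x)

/-- The filter of sets whose complement is covered, up to finitely many points, by finitely many
sets of children and of grandchildren. -/
def escapeFilter : Filter TreePoint :=
  cofinite ⊓ ⨅ x, 𝓟 (children x ∪ grandchildren x)ᶜ

theorem frequently_childFilter {x : List ℕ} {K : Set TreePoint} :
    (∃ᶠ y in childFilter x, y ∈ K) ↔ ∃ᶠ n in cofinite, bot (n :: x) ∈ K :=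
  frequently_map

theorem mem_grandchildFilter {x : List ℕ} {U : Set TreePoint} :
    U ∈ grandchildFilter x ↔ ∀ᶠ n in cofinite, ∀ m, bot (m :: n :: x) ∈ U := by
  rw [grandchildFilter, mem_map, mem_comap']
  refine eventually_congr (.of_forall fun n => ⟨fun h m => @h (n, m) rfl, ?_⟩)
  rintro h ⟨_, m⟩ rfl
  exact h m

theorem frequently_grandchildFilter {x : List ℕ} {K : Set TreePoint} :
    (∃ᶠ y in grandchildFilter x, y ∈ K) ↔ ∃ᶠ n in cofinite, ∃ m, bot (m :: n :: x) ∈ K := by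
  have h := mem_grandchildFilter (x := x) (U := Kᶜ)
  simpa [Filter.Frequently, Filter.Eventually, compl_def] using not_congr h

theorem childFilter_le_cofinite (x : List ℕ) : childFilter x ≤ cofinite :=
  (bot_injective.comp (cons_left_injective x)).tendsto_cofinite

theorem grandchildFilter_le_cofinite (x : List ℕ) : grandchildFilter x ≤ cofinite := by
  have hinj : Function.Injective fun p : ℕ × ℕ => bot (p.2 :: p.1 :: x) := by
    rintro ⟨n, m⟩ ⟨n', m'⟩ h
    simpa [and_comm] using h
  exact hinj.tendsto_cofinite.mono_left (comap_cofinite_le _)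

theorem le_childFilter {f : Filter TreePoint} {x : List ℕ} (hf : f ≤ cofinite)
    (hx : children x ∈ f) : f ≤ childFilter x := by
  intro U hU
  have hfin : (children x \ U).Finite := by
    refine (Set.Finite.image (fun n => bot (n :: x)) hU).subset ?_
    rintro _ ⟨⟨n, rfl⟩, hn⟩
    exact ⟨n, hn, rfl⟩
  filter_upwards [hx, hf hfin.compl_mem_cofinite] with y hy hyU
  exact not_not.1 fun h => hyU ⟨hy, h⟩

theorem le_grandchildFilter {f : Ultrafilter TreePoint} {x : List ℕ} (hx : grandchildren x ∈ f)
    (hchild : ∀ n, children (n :: x) ∉ f) : (f : Filter TreePoint) ≤ grandchildFilter x := by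
  intro U hU
  have hfin : {n | ∀ m, bot (m :: n :: x) ∈ U}ᶜ.Finite := mem_grandchildFilter.1 hU
  have hbad : ⋃ n ∈ {n | ∀ m, bot (m :: n :: x) ∈ U}ᶜ, children (n :: x) ∉ f := by
    rw [Ultrafilter.finite_biUnion_mem_iff hfin]
    exact fun ⟨n, _, hn⟩ => hchild n hn
  refine mem_of_superset (inter_mem hx (Ultrafilter.compl_mem_iff_notMem.2 hbad)) ?_
  rintro y ⟨hy, hyU⟩
  obtain ⟨n, m, rfl⟩ := mem_iUnion.1 hy
  by_contra hm
  exact hyU (mem_biUnion (fun h => hm (h m)) ⟨m, rfl⟩)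

theorem ultrafilter_cases (f : Ultrafilter TreePoint) :
    (∃ a, f = pure a) ∨ (∃ x, f ≤ childFilter x) ∨ (∃ x, f ≤ grandchildFilter x) ∨
      f ≤ escapeFilter := by
  obtain hf | ⟨a, rfl⟩ := f.le_cofinite_or_eq_pure
  · by_cases hc : ∃ x, children x ∈ f
    · exact Or.inr <| Or.inl <| hc.imp fun x => le_childFilter hf
    by_cases hg : ∃ x, grandchildren x ∈ f
    · exact Or.inr <| Or.inr <| Or.inl <| hg.imp fun x hx =>
        le_grandchildFilter hx fun n hn => hc ⟨_, hn⟩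
    · refine Or.inr <| Or.inr <| Or.inr <| le_inf hf <| le_iInf fun x => le_principal_iff.2 ?_
      exact Ultrafilter.compl_mem_iff_notMem.2 fun hx =>
        (Ultrafilter.union_mem_iff.1 hx).elim (fun h => hc ⟨x, h⟩) fun h => hg ⟨x, h⟩
  · exact Or.inl ⟨a, rfl⟩

/-- The open sets of `TreePoint`. The children of `x` converge to `bot x`, any choice of
grandchildren of `x` below distinct children converges to `top (label x)`, and every ultrafilter
living on neither kind of set converges to all points, which makes the space compact. -/
structure IsOpenSet (U : Set TreePoint) : Prop where
  top_mem : ∀ x, bot x ∈ U → top x ∈ U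
  mem_childFilter : ∀ x, bot x ∈ U → U ∈ childFilter x
  mem_grandchildFilter : ∀ x, top (label x) ∈ U → U ∈ grandchildFilter x
  mem_escapeFilter : U.Nonempty → U ∈ escapeFilter

instance : TopologicalSpace TreePoint where
  IsOpen := IsOpenSet
  isOpen_univ := ⟨fun _ _ => trivial, fun _ _ => univ_mem, fun _ _ => univ_mem, fun _ => univ_mem⟩
  isOpen_inter _ _ hU hV :=
    ⟨fun x h => ⟨hU.top_mem x h.1, hV.top_mem x h.2⟩,
      fun x h => inter_mem (hU.mem_childFilter x h.1) (hV.mem_childFilter x h.2),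
      fun x h => inter_mem (hU.mem_grandchildFilter x h.1) (hV.mem_grandchildFilter x h.2),
      fun h => inter_mem (hU.mem_escapeFilter h.left) (hV.mem_escapeFilter h.right)⟩
  isOpen_sUnion _ hS :=
    ⟨fun x ⟨U, hU, h⟩ => ⟨U, hU, (hS U hU).top_mem x h⟩,
      fun x ⟨U, hU, h⟩ => mem_of_superset ((hS U hU).mem_childFilter x h) (subset_sUnion_of_mem hU),
      fun x ⟨U, hU, h⟩ =>
        mem_of_superset ((hS U hU).mem_grandchildFilter x h) (subset_sUnion_of_mem hU),
      fun ⟨y, U, hU, h⟩ =>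
        mem_of_superset ((hS U hU).mem_escapeFilter ⟨y, h⟩) (subset_sUnion_of_mem hU)⟩

theorem isOpen_iff {U : Set TreePoint} : IsOpen U ↔ IsOpenSet U := Iff.rfl

theorem childFilter_le_nhds (x : List ℕ) : childFilter x ≤ 𝓝 (bot x) :=
  (nhds_basis_opens _).ge_iff.2 fun _ ⟨hx, hU⟩ => (isOpen_iff.1 hU).mem_childFilter x hx

theorem grandchildFilter_le_nhds (x : List ℕ) : grandchildFilter x ≤ 𝓝 (top (label x)) :=
  (nhds_basis_opens _).ge_iff.2 fun _ ⟨hx, hU⟩ => (isOpen_iff.1 hU).mem_grandchildFilter x hx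

theorem escapeFilter_le_nhds (a : TreePoint) : escapeFilter ≤ 𝓝 a :=
  (nhds_basis_opens _).ge_iff.2 fun _ ⟨ha, hU⟩ => (isOpen_iff.1 hU).mem_escapeFilter ⟨a, ha⟩

theorem top_specializes_bot (x : List ℕ) : top x ⤳ bot x :=
  specializes_iff_forall_open.2 fun _ hU => (isOpen_iff.1 hU).top_mem x

theorem isClosed_union_of_finite {S T : Set TreePoint} (hT : T.Finite)
    (hbot : ∀ x, top x ∈ S ∪ T → bot x ∈ S ∪ T)
    (hchild : ∀ x, (∃ᶠ y in childFilter x, y ∈ S) → bot x ∈ S ∪ T)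
    (hgrand : ∀ x, (∃ᶠ y in grandchildFilter x, y ∈ S) → top (label x) ∈ S ∪ T)
    (hS : Sᶜ ∈ escapeFilter) : IsClosed (S ∪ T) := by
  have hmem {F : Filter TreePoint} (hF : F ≤ cofinite) (h : Sᶜ ∈ F) : (S ∪ T)ᶜ ∈ F := by
    rw [compl_union]
    exact inter_mem h (hF hT.compl_mem_cofinite)
  refine ⟨isOpen_iff.2 ⟨fun x => mt (hbot x), fun x hx => ?_, fun x hx => ?_, fun _ => ?_⟩⟩
  · exact hmem (childFilter_le_cofinite x) (not_frequently.1 (mt (hchild x) hx))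
  · exact hmem (grandchildFilter_le_cofinite x) (not_frequently.1 (mt (hgrand x) hx))
  · exact hmem inf_le_left hS

theorem isClosed_of_finite {T : Set TreePoint} (hT : T.Finite) (hbot : ∀ x, top x ∈ T → bot x ∈ T) :
    IsClosed T := by
  rw [← empty_union T] at hbot ⊢
  exact isClosed_union_of_finite hT hbot (by simp) (by simp) (by simp)

theorem isClosed_singleton_bot (x : List ℕ) : IsClosed {bot x} :=
  isClosed_of_finite (finite_singleton _) (by simp)

theorem isClosed_pair (x : List ℕ) : IsClosed {bot x, top x} :=
  isClosed_of_finite (toFinite _) (by simp)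

theorem specializes_iff {a b : TreePoint} : a ⤳ b ↔ a = b ∨ ∃ x, a = top x ∧ b = bot x := by
  refine ⟨fun h => ?_, ?_⟩
  · cases a with
    | bot x => exact Or.inl (h.mem_closed (isClosed_singleton_bot x) rfl).symm
    | top x =>
      have hb : b ∈ ({bot x, top x} : Set TreePoint) := h.mem_closed (isClosed_pair x) (by simp)
      exact hb.symm.imp Eq.symm fun hb => ⟨x, rfl, hb⟩
  · rintro (rfl | ⟨x, rfl, rfl⟩)
    exacts [specializes_rfl, top_specializes_bot x]

instance : T0Space TreePoint := by
  refine ⟨fun a b h => ?_⟩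
  obtain hab | ⟨x, rfl, rfl⟩ := specializes_iff.1 h.specializes
  · exact hab
  · simpa [eq_comm] using specializes_iff.1 h.symm.specializes

theorem isSaturatedSet_iff {Q : Set TreePoint} :
    IsSaturatedSet inferInstance Q ↔ ∀ x, bot x ∈ Q → top x ∈ Q := by
  rw [isSaturatedSet_iff_forall_specializes]
  refine ⟨fun h x => h _ _ (top_specializes_bot x), fun h a b hab hb => ?_⟩
  obtain rfl | ⟨x, rfl, rfl⟩ := specializes_iff.1 hab
  exacts [hb, h x hb]

theorem isCompact_of_frequently {K : Set TreePoint}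
    (hchild : ∀ x, (∃ᶠ n in cofinite, bot (n :: x) ∈ K) → bot x ∈ K)
    (hgrand : ∀ x, (∃ᶠ n in cofinite, ∃ m, bot (m :: n :: x) ∈ K) →
      bot (label x) ∈ K ∨ top (label x) ∈ K) : IsCompact K := by
  refine isCompact_iff_ultrafilter_le_nhds'.2 fun f hK => ?_
  have hfreq {F : Filter TreePoint} (hF : f ≤ F) : ∃ᶠ y in F, y ∈ K :=
    (Eventually.frequently hK).filter_mono hF
  obtain ⟨a, rfl⟩ | ⟨x, hx⟩ | ⟨x, hx⟩ | hesc := ultrafilter_cases f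
  · exact ⟨a, hK, pure_le_nhds a⟩
  · exact ⟨_, hchild x (frequently_childFilter.1 (hfreq hx)), hx.trans (childFilter_le_nhds x)⟩
  · have hlim := hx.trans (grandchildFilter_le_nhds x)
    obtain h | h := hgrand x (frequently_grandchildFilter.1 (hfreq hx))
    exacts [⟨_, h, hlim.trans (top_specializes_bot _)⟩, ⟨_, h, hlim⟩]
  · obtain ⟨a, ha⟩ := f.nonempty_of_mem hK
    exact ⟨a, ha, hesc.trans (escapeFilter_le_nhds a)⟩

theorem isClosed_union_of_subset_children {x : List ℕ} {R : Set TreePoint} (hR : R ⊆ children x) :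
    IsClosed (R ∪ {bot x}) := by
  refine isClosed_union_of_finite (finite_singleton _) (fun y hy => ?_) (fun y hy => ?_)
    (fun y hy => ?_) ?_
  · obtain h | h := hy
    · obtain ⟨n, hn⟩ := hR h
      cases hn
    · cases h
  · obtain ⟨n, hn⟩ := (frequently_childFilter.1 hy).exists
    obtain ⟨m, hm⟩ := hR hn
    obtain ⟨-, rfl⟩ := List.cons.inj (bot_injective hm)
    exact Or.inr rfl
  · obtain ⟨n, ⟨m, hm⟩, hne⟩ :=
      ((frequently_grandchildFilter.1 hy).and_eventually (eventually_cons_ne y x)).exists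
    obtain ⟨k, hk⟩ := hR hm
    exact absurd (List.cons.inj (bot_injective hk)).2.symm hne
  · refine mem_inf_of_right (mem_iInf_of_mem x ?_)
    exact compl_subset_compl.2 (hR.trans subset_union_left)

theorem bot_mem_of_frequently {K : Set TreePoint} (hK : IsCompact K) {x : List ℕ}
    (h : ∃ᶠ n in cofinite, bot (n :: x) ∈ K) : bot x ∈ K := by
  have hinf : ((fun n => bot (n :: x)) '' {n | bot (n :: x) ∈ K}).Infinite :=
    (frequently_cofinite_iff_infinite.1 h).image
      (bot_injective.comp (cons_left_injective x)).injOn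
  obtain ⟨_, hmem, rfl⟩ := inter_nonempty_of_isClosed_union hK (image_subset_iff.2 fun n hn => hn)
    hinf fun R hR => isClosed_union_of_subset_children (hR.trans (image_subset_range _ _))
  exact hmem

theorem isClosed_union_of_subset_range {x : List ℕ} (m : ℕ → ℕ) {R : Set TreePoint}
    (hR : R ⊆ range fun n => bot (m n :: n :: x)) :
    IsClosed (R ∪ {bot (label x), top (label x)}) := by
  refine isClosed_union_of_finite (toFinite _) (fun y hy => ?_) (fun y hy => ?_)
    (fun y hy => ?_) ?_
  · obtain h | h := hy
    · obtain ⟨n, hn⟩ := hR h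
      cases hn
    · obtain h | h := h
      · cases h
      · exact Or.inr (Or.inl (congrArg bot (top.inj h)))
  · have hfreq := frequently_childFilter.1 hy
    obtain ⟨n, rfl⟩ : ∃ n, n :: x = y := by
      obtain ⟨k, hk⟩ := hfreq.exists
      exact (hR hk).imp fun n hn => (List.cons.inj (bot_injective hn)).2
    obtain ⟨k, hk, hne⟩ := (hfreq.and_eventually (eventually_cofinite_ne (m n))).exists
    obtain ⟨n', hn⟩ := hR hk
    obtain ⟨hmk, rfl⟩ : m n' = k ∧ n' = n := by simpa using bot_injective hn
    exact absurd hmk.symm hne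
  · obtain ⟨n, k, hk⟩ := (frequently_grandchildFilter.1 hy).exists
    obtain ⟨n', hn⟩ := hR hk
    obtain ⟨-, -, rfl⟩ : _ ∧ n' = n ∧ x = y := by simpa using bot_injective hn
    exact Or.inr (Or.inr rfl)
  · refine mem_inf_of_right (mem_iInf_of_mem x (compl_subset_compl.2 (hR.trans ?_)))
    rintro _ ⟨n, rfl⟩
    exact Or.inr (mem_iUnion.2 ⟨n, m n, rfl⟩)

theorem label_mem_of_frequently {K : Set TreePoint} (hK : IsCompact K) {x : List ℕ}
    (h : ∃ᶠ n in cofinite, ∃ m, bot (m :: n :: x) ∈ K) :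
    bot (label x) ∈ K ∨ top (label x) ∈ K := by
  choose! m hm using fun n (hn : ∃ m, bot (m :: n :: x) ∈ K) => hn
  have hinj : Function.Injective fun n => bot (m n :: n :: x) := fun a b hab =>
    (List.cons.inj (List.cons.inj (bot_injective hab)).2).1
  obtain ⟨_, hmem, rfl | rfl⟩ := inter_nonempty_of_isClosed_union hK (image_subset_iff.2 hm)
    ((frequently_cofinite_iff_infinite.1 h).image hinj.injOn)
    fun R hR => isClosed_union_of_subset_range m (hR.trans (image_subset_range _ _))
  exacts [Or.inl hmem, Or.inr hmem]

theorem range_bot_subset_or_subset {K L : Set TreePoint} (hK : IsCompact K) (hL : IsCompact L)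
    (hLbot : L ⊆ range bot) (hKL : range bot ⊆ K ∪ L) : range bot ⊆ K ∨ range bot ⊆ L := by
  refine or_iff_not_imp_left.2 fun hnot => ?_
  have hchild {x : List ℕ} (hx : bot x ∉ K) : ∀ᶠ n in cofinite, bot (n :: x) ∉ K :=
    not_frequently.1 (mt (bot_mem_of_frequently hK) hx)
  obtain ⟨_, ⟨x, rfl⟩, hx⟩ := not_subset.1 hnot
  rintro _ ⟨y, rfl⟩
  obtain ⟨n, hlabel, hn⟩ := ((frequently_label_cons x y).and_eventually (hchild hx)).exists
  have hgrand : ∃ᶠ m in cofinite, ∃ k, bot (k :: m :: n :: x) ∈ L := by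
    refine ((hchild hn).mono fun m hm => ?_).frequently
    obtain ⟨k, hk⟩ := (hchild hm).exists
    exact ⟨k, (hKL ⟨_, rfl⟩).resolve_left hk⟩
  obtain h | h := hlabel ▸ label_mem_of_frequently hL hgrand
  · exact h
  · obtain ⟨z, hz⟩ := hLbot h
    cases hz

theorem isClosed_bTop_range_bot : @IsClosed TreePoint (bTop _ inferInstance) (range bot) := by
  refine isClosed_bTop_iff.2 fun z hz => ?_
  obtain x | x := z
  · exact absurd ⟨x, rfl⟩ hz
  refine ⟨{bot x}ᶜ, (isClosed_singleton_bot x).isOpen_compl, by simp, disjoint_left.2 ?_⟩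
  rintro _ ⟨y, rfl⟩ ⟨hy, hcl⟩
  have hpair : bot y ∈ ({bot x, top x} : Set TreePoint) :=
    closure_minimal (by simp) (isClosed_pair x) hcl
  exact hy (by simpa using hpair)

theorem isCompact_range_bot : IsCompact (range bot) :=
  isCompact_of_frequently (fun x _ => ⟨x, rfl⟩) fun _ _ => Or.inl ⟨_, rfl⟩

theorem not_coSober_range_bot : ¬ CoSober (range bot) instTopologicalSpaceSubtype := by
  have : T1Space (range bot) := by
    refine ⟨?_⟩
    rintro ⟨_, x, rfl⟩
    convert (isClosed_singleton_bot x).preimage continuous_subtype_val using 1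
    ext
    simp only [mem_singleton_iff, mem_preimage, Subtype.ext_iff]
  have : CompactSpace (range bot) := isCompact_iff_compactSpace.1 isCompact_range_bot
  have : Nontrivial (range bot) :=
    ⟨⟨bot [], mem_range_self _⟩, ⟨bot [0], mem_range_self _⟩, fun h =>
      List.cons_ne_nil _ _ (bot_injective (congrArg Subtype.val h)).symm⟩
  refine not_coSober_of_t1Space fun Q₁ Q₂ hc₁ hc₂ hunion => ?_
  have heq_univ {Q : Set (range bot)} (hQ : range bot ⊆ Subtype.val '' Q) : Q = univ :=
    eq_univ_of_forall fun a => Subtype.val_injective.mem_set_image.1 (hQ a.2)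
  have hcover : range bot ⊆ Subtype.val '' Q₁ ∪ Subtype.val '' Q₂ := by
    rw [← image_union, hunion, Subtype.coe_image_univ]
  exact (range_bot_subset_or_subset (hc₁.image continuous_subtype_val)
    (hc₂.image continuous_subtype_val) (Subtype.coe_image_subset _ _) hcover).imp heq_univ heq_univ

/-- A set of vertices containing almost every child of each of its elements. -/
def IsTreeOpen (V : Set (List ℕ)) : Prop := ∀ x ∈ V, ∀ᶠ n in cofinite, n :: x ∈ V

theorem isTreeOpen_setOf_suffix (x : List ℕ) : IsTreeOpen {y | x <:+ y} := fun _ hy =>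
  Eventually.of_forall fun n => hy.trans (List.suffix_cons n _)

theorem isTreeOpen_compl_setOf_suffix (x : List ℕ) : IsTreeOpen {y | x <:+ y}ᶜ := fun y hy =>
  (eventually_cons_ne y x).mono fun _ hne h =>
    (List.suffix_cons_iff.1 h).elim (fun h => hne h.symm) hy

theorem exists_isTreeOpen_mem_notMem {x y : List ℕ} (hxy : x ≠ y) :
    ∃ V, IsTreeOpen V ∧ IsTreeOpen Vᶜ ∧ x ∈ V ∧ y ∉ V := by
  by_cases h : x <:+ y
  · refine ⟨{z | y <:+ z}ᶜ, isTreeOpen_compl_setOf_suffix y, ?_, fun h' => ?_, ?_⟩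
    · simpa only [compl_compl] using isTreeOpen_setOf_suffix y
    · exact hxy (h.eq_of_length (h.length_le.antisymm (List.IsSuffix.length_le h')))
    · simp
  · exact ⟨_, isTreeOpen_setOf_suffix x, isTreeOpen_compl_setOf_suffix x, List.suffix_rfl, h⟩

theorem isCompact_sdiff_image_bot {K : Set TreePoint} (hK : IsCompact K)
    (hsat : IsSaturatedSet inferInstance K) {V : Set (List ℕ)} (hV : IsTreeOpen V) :
    IsCompact (K \ bot '' V) := by
  refine isCompact_of_frequently (fun x h => ⟨?_, ?_⟩) fun x h => Or.inr ⟨?_, ?_⟩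
  · exact bot_mem_of_frequently hK (h.mono fun _ => And.left)
  · rw [bot_injective.mem_set_image]
    intro hx
    obtain ⟨n, hn, hnV⟩ := (h.and_eventually (hV x hx)).exists
    exact hn.2 ⟨_, hnV, rfl⟩
  · exact (label_mem_of_frequently hK (h.mono fun _ ⟨m, hm⟩ => ⟨m, hm.1⟩)).elim
      (isSaturatedSet_iff.1 hsat _) id
  · rintro ⟨y, -, hy⟩
    cases hy

theorem isSaturatedSet_sdiff_image_bot {K : Set TreePoint} (hK : IsSaturatedSet inferInstance K)
    (V : Set (List ℕ)) : IsSaturatedSet inferInstance (K \ bot '' V) := by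
  rw [isSaturatedSet_iff] at hK ⊢
  rintro x ⟨hx, -⟩
  exact ⟨hK x hx, by simp⟩

theorem eq_of_bot_mem_of_kIrreducible {Q : Set TreePoint} (hQ : KIrreducible inferInstance Q)
    {x y : List ℕ} (hx : bot x ∈ Q) (hy : bot y ∈ Q) : x = y := by
  by_contra hxy
  obtain ⟨-, hc, hs, hirr⟩ := hQ
  obtain ⟨V, hV, hVc, hxV, hyV⟩ := exists_isTreeOpen_mem_notMem hxy
  have hunion : Q = Q \ bot '' V ∪ Q \ bot '' Vᶜ := by
    rw [← sdiff_inter, ← image_inter bot_injective, inter_compl_self, image_empty, sdiff_empty]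
  obtain h | h := hirr _ _
    (isCompact_sdiff_image_bot hc hs hV) (isSaturatedSet_sdiff_image_bot hs V)
    (isCompact_sdiff_image_bot hc hs hVc) (isSaturatedSet_sdiff_image_bot hs Vᶜ) hunion
  · exact (h ▸ hx).2 ⟨x, hxV, rfl⟩
  · exact (h ▸ hy).2 ⟨y, hyV, rfl⟩

theorem coSober : CoSober TreePoint inferInstance := by
  refine coSober_iff.2 fun Q hQ => ?_
  obtain ⟨a, ha, htop⟩ : ∃ a ∈ Q, ∀ x, bot x ∉ Q \ {a} := by
    by_cases h : ∃ x, bot x ∈ Q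
    · obtain ⟨x, hx⟩ := h
      refine ⟨bot x, hx, fun y hy => hy.2 ?_⟩
      rw [eq_of_bot_mem_of_kIrreducible hQ hy.1 hx, mem_singleton_iff]
    · obtain ⟨a, ha⟩ := hQ.1
      exact ⟨a, ha, fun x hx => h ⟨x, hx.1⟩⟩
  refine ⟨a, hQ.eq_nhdsKer_singleton ha ?_ ?_⟩
  · exact isCompact_of_frequently (fun x h => absurd h (by simp [htop]))
      fun x h => absurd h (by simp [htop])
  · exact isSaturatedSet_iff.2 fun x hx => absurd hx (htop x)

theorem coSobClass : CoSobClass TreePoint inferInstance := ⟨inferInstance, coSober⟩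

theorem not_t1Space : ¬ T1Space TreePoint := fun _ =>
  nomatch (top_specializes_bot []).eq

end TreePoint

theorem notSubT1_coSobClass : NotSubT1 CoSobClass :=
  ⟨TreePoint, inferInstance, TreePoint.coSobClass, TreePoint.not_t1Space⟩

theorem not_bClosedHereditary_coSobClass : ¬ BClosedHereditary CoSobClass := fun h =>
  TreePoint.not_coSober_range_bot
    (h _ _ _ TreePoint.coSobClass TreePoint.isClosed_bTop_range_bot).2

/-- the category of co-sober T₀ spaces is not reflective in Top₀. -/
theorem statement16 : ¬ IsReflective CoSobClass := fun h =>
  not_bClosedHereditary_coSobClass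
    (h.bClosedHereditary allT0_coSobClass closedUnderHomeo_coSobClass notSubT1_coSobClass)
end
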